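/- arXiv:1301.3051 — 7 statements merged into one kernel-verified Lean document; each statement's English description precedes it below -/
import Mathlib

section
/- Let a < b be real numbers and let (f_n) be a sequence of real-valued functions on [a,b], each convex on [a,b] and differentiable at every point of the open interval (a,b). Assume (f_n) converges uniformly on [a,b] to some function f. Then for all real numbers alpha, beta with a < alpha <= beta < b there exists a constant c such that |f_n'(x)| <= c for every n and every x in [alpha, beta]. -/
open Filter Set

/-- If a sequence of functions, convex on `[a,b]` and differentiable on `(a,b)`,
converges uniformly on `[a,b]`, then on every compact subinterval `[α,β] ⊂ (a,b)` the
derivatives are uniformly bounded (in `n` and `x`). -/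
theorem stmt_0 (a b : ℝ) (hab : a < b) (f : ℕ → ℝ → ℝ) (F : ℝ → ℝ)
    (hconv : ∀ n, ConvexOn ℝ (Set.Icc a b) (f n))
    (hdiff : ∀ n, ∀ x ∈ Set.Ioo a b, DifferentiableAt ℝ (f n) x)
    (hunif : TendstoUniformlyOn f F Filter.atTop (Set.Icc a b)) :
    ∀ α β : ℝ, a < α → α ≤ β → β < b →
      ∃ c : ℝ, ∀ n : ℕ, ∀ x ∈ Set.Icc α β, |deriv (f n) x| ≤ c := by
  intro α β haα hαβ hβb
  have ha : a ∈ Set.Icc a b := ⟨le_rfl, hab.le⟩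
  have hb : b ∈ Set.Icc a b := ⟨hab.le, le_rfl⟩
  have hα : α ∈ Set.Icc a b := ⟨haα.le, by linarith⟩
  have hβ : β ∈ Set.Icc a b := ⟨by linarith, hβb.le⟩
  have hs : ∀ x ∈ Set.Icc a b, ∀ y ∈ Set.Icc a b,
      Tendsto (fun n => slope (f n) x y) atTop (nhds (slope F x y)) := by
    intro x hx y hy
    simp only [slope_def_field]
    exact ((hunif.tendsto_at hy).sub (hunif.tendsto_at hx)).div_const _
  -- lower bound from the slopes on `[a, α]`, upper bound from those on `[β, b]`
  obtain ⟨m, hm⟩ := (hs a ha α hα).bddBelow_range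
  obtain ⟨M, hM⟩ := (hs β hβ b hb).bddAbove_range
  refine ⟨max |m| |M|, fun n x hx => ?_⟩
  have hxI : x ∈ Set.Icc a b := ⟨by linarith [hx.1], by linarith [hx.2]⟩
  have dα := hdiff n α ⟨haα, by linarith⟩
  have dβ := hdiff n β ⟨by linarith, hβb⟩
  have dx := hdiff n x ⟨by linarith [hx.1], by linarith [hx.2]⟩
  have h1 : m ≤ slope (f n) a α := hm ⟨n, rfl⟩
  have h2 : slope (f n) β b ≤ M := hM ⟨n, rfl⟩
  have h3 := (hconv n).slope_le_deriv ha hα haα dα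
  have h4 := (hconv n).deriv_le_slope hβ hb hβb dβ
  have h5 : deriv (f n) α ≤ deriv (f n) x := by
    rcases hx.1.eq_or_lt with h | h
    · rw [h]
    · exact ((hconv n).deriv_le_slope hα hxI h dα).trans
        ((hconv n).slope_le_deriv hα hxI h dx)
  have h6 : deriv (f n) x ≤ deriv (f n) β := by
    rcases hx.2.eq_or_lt with h | h
    · rw [h]
    · exact ((hconv n).deriv_le_slope hxI hβ h dx).trans
        ((hconv n).slope_le_deriv hxI hβ h dβ)
  exact abs_le_max_abs_abs (by linarith) (by linarith)
end

section
/- Fix a positive integer m. There exists a constant c0 > 0 (depending only on m) such that for all real numbers a, b with 1 <= a <= b and every real t >= 0, |(1 + t^a)^(m/a) / (1 + t^b)^(m/b) - 1| <= c0 * (1/a - 1/b). -/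
theorem aux_log (a b t : ℝ) (ha : 1 ≤ a) (hab : a ≤ b) (ht : 0 ≤ t) (ht1 : t ≤ 1) :
    0 ≤ Real.log (1 + t ^ a) / a - Real.log (1 + t ^ b) / b ∧
    Real.log (1 + t ^ a) / a - Real.log (1 + t ^ b) / b ≤ 2 * (1/a - 1/b) := by
  have ha0 : 0 < a := by linarith
  have hb0 : 0 < b := by linarith
  have hk : 1 ≤ b / a := by rw [le_div_iff₀ ha0]; linarith
  have hs0 : 0 ≤ t ^ a := Real.rpow_nonneg ht a
  have hs1 : t ^ a ≤ 1 := Real.rpow_le_one ht ht1 ha0.le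
  have hr0 : 0 ≤ t ^ b := Real.rpow_nonneg ht b
  have hpow : t ^ b = (t ^ a) ^ (b / a) := by
    rw [← Real.rpow_mul ht]; congr 1; field_simp
  have hbern : 1 + (b / a) * (t ^ a - 1) ≤ t ^ b := by
    have := one_add_mul_self_le_rpow_one_add (s := t ^ a - 1) (by linarith) hk
    rw [hpow]; simpa using this
  have hle : t ^ b ≤ t ^ a := by
    rw [hpow]; exact Real.rpow_le_self_of_le_one hs0 hs1 hk
  have hlog : Real.log (1 + t ^ b) ≤ Real.log (1 + t ^ a) :=
    Real.log_le_log (by linarith) (by linarith)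
  have hL0 : 0 ≤ Real.log (1 + t ^ b) := Real.log_nonneg (by linarith)
  have hL1 : Real.log (1 + t ^ a) ≤ 1 := by
    have := Real.log_le_sub_one_of_pos (x := 1 + t ^ a) (by linarith)
    linarith
  have hδ : 0 ≤ 1/a - 1/b := by
    have := one_div_le_one_div_of_le ha0 hab
    linarith
  have hD : Real.log (1 + t ^ a) - Real.log (1 + t ^ b) ≤ b / a - 1 := by
    rw [← Real.log_div (by linarith) (by linarith)]
    have h1 := Real.log_le_sub_one_of_pos (x := (1 + t ^ a) / (1 + t ^ b)) (by positivity)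
    have h2 : (1 + t ^ a) / (1 + t ^ b) ≤ b / a := by
      rw [div_le_iff₀ (by linarith)]
      nlinarith
    linarith
  have hdec : Real.log (1 + t ^ a) / a - Real.log (1 + t ^ b) / b =
      (1/a - 1/b) * Real.log (1 + t ^ a)
        + (1/b) * (Real.log (1 + t ^ a) - Real.log (1 + t ^ b)) := by ring
  have hbi : 0 ≤ 1 / b := by positivity
  rw [hdec]
  constructor
  · have := mul_nonneg hδ (hL0.trans hlog)
    have := mul_nonneg hbi (sub_nonneg.2 hlog)
    linarith
  · have h1 := mul_le_mul_of_nonneg_left hL1 hδ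
    have h2 := mul_le_mul_of_nonneg_left hD hbi
    have h3 : (1 / b) * (b / a - 1) = 1 / a - 1 / b := by field_simp
    linarith

theorem aux_le_one (m : ℕ) (a b t : ℝ) (ha : 1 ≤ a) (hab : a ≤ b) (ht : 0 ≤ t)
    (ht1 : t ≤ 1) :
    |(1 + t ^ a) ^ ((m : ℝ)/a) / (1 + t ^ b) ^ ((m : ℝ)/b) - 1| ≤
      (2 * m * Real.exp (2 * m)) * (1/a - 1/b) := by
  obtain ⟨h0, h1⟩ := aux_log a b t ha hab ht ht1
  have hsa : 0 < 1 + t ^ a := by positivity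
  have hsb : 0 < 1 + t ^ b := by positivity
  have hb0 : 0 < b := by linarith
  set x := Real.log (1 + t ^ a) / a - Real.log (1 + t ^ b) / b with hx
  have heq : (1 + t ^ a) ^ ((m : ℝ)/a) / (1 + t ^ b) ^ ((m : ℝ)/b) = Real.exp (m * x) := by
    rw [Real.rpow_def_of_pos hsa, Real.rpow_def_of_pos hsb, ← Real.exp_sub]
    congr 1
    rw [hx]; ring
  have hm0 : (0 : ℝ) ≤ m := Nat.cast_nonneg m
  have hy0 : 0 ≤ m * x := mul_nonneg hm0 h0
  have hy1 : m * x ≤ 2 * m * (1/a - 1/b) := by nlinarith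
  have hδ1 : 1/a - 1/b ≤ 1 := by
    have : 1/a ≤ 1 := by rw [div_le_one (by linarith)]; exact ha
    have : 0 ≤ 1/b := by positivity
    linarith
  have hy2 : m * x ≤ 2 * m := by nlinarith
  rw [heq, abs_of_nonneg (by linarith [Real.one_le_exp hy0])]
  have he : Real.exp (m * x) - 1 ≤ m * x * Real.exp (m * x) := by
    have h := Real.add_one_le_exp (-(m * x))
    have h2 := mul_le_mul_of_nonneg_right h (Real.exp_pos (m * x)).le
    rw [← Real.exp_add, neg_add_cancel, Real.exp_zero] at h2
    linarith
  calc _ ≤ m * x * Real.exp (m * x) := he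
    _ ≤ (2 * m * (1/a - 1/b)) * Real.exp (2 * m) :=
      mul_le_mul hy1 (Real.exp_le_exp.2 hy2) (Real.exp_pos _).le (hy0.trans hy1)
    _ = _ := by ring

theorem aux_inv (m : ℕ) (a t : ℝ) (ha : 1 ≤ a) (ht : 0 < t) :
    (1 + t ^ a) ^ ((m : ℝ)/a) = t ^ (m : ℝ) * (1 + t⁻¹ ^ a) ^ ((m : ℝ)/a) := by
  have hp : 0 < t ^ a := Real.rpow_pos_of_pos ht a
  have h : 1 + t ^ a = t ^ a * (1 + t⁻¹ ^ a) := by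
    rw [Real.inv_rpow ht.le]; field_simp; ring
  rw [h, Real.mul_rpow hp.le (by positivity), ← Real.rpow_mul ht.le]
  congr 2
  field_simp

/-- For a fixed positive integer `m` there is `c0 > 0` such that for all
`1 ≤ a ≤ b` and `t ≥ 0`, `|(1+t^a)^(m/a) / (1+t^b)^(m/b) - 1| ≤ c0 * (1/a - 1/b)`. -/
theorem stmt_2 (m : ℕ) (hm : 0 < m) :
    ∃ c0 : ℝ, 0 < c0 ∧ ∀ a b : ℝ, 1 ≤ a → a ≤ b → ∀ t : ℝ, 0 ≤ t →
      |(1 + t ^ a) ^ ((m : ℝ)/a) / (1 + t ^ b) ^ ((m : ℝ)/b) - 1| ≤ c0 * (1/a - 1/b) := by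
  have hm' : (0 : ℝ) < m := Nat.cast_pos.2 hm
  refine ⟨2 * m * Real.exp (2 * m), by positivity, ?_⟩
  intro a b ha hab t ht
  rcases le_total t 1 with h | h
  · exact aux_le_one m a b t ha hab ht h
  · have ht0 : 0 < t := by linarith
    rw [aux_inv m a t ha ht0, aux_inv m b t (ha.trans hab) ht0,
      mul_div_mul_left _ _ (Real.rpow_pos_of_pos ht0 _).ne']
    exact aux_le_one m a b t⁻¹ ha hab (by positivity) (inv_le_one_of_one_le₀ h)
end

section
/- For all real numbers a, b with 1 <= a <= b and every real x with 0 <= x <= 1, |(1 + x^b)^(-1/b) - (1 + x^a)^(-1/a)| <= (2*log 2 + 1/e) * (1/a - 1/b). -/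
/-- For `1 ≤ a ≤ b` and `0 ≤ x ≤ 1`,
`|(1+x^b)^(-1/b) - (1+x^a)^(-1/a)| ≤ (2 log 2 + 1/e) * (1/a - 1/b)`. -/
theorem stmt_3 (a b : ℝ) (ha : 1 ≤ a) (hab : a ≤ b) (x : ℝ) (hx0 : 0 ≤ x) (hx1 : x ≤ 1) :
    |(1 + x ^ b) ^ (-(1/b)) - (1 + x ^ a) ^ (-(1/a))| ≤
      (2 * Real.log 2 + 1 / Real.exp 1) * (1/a - 1/b) := by
  have ha0 : 0 < a := by linarith
  have hb0 : 0 < b := by linarith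
  have hinv : 1/b ≤ 1/a := one_div_le_one_div_of_le ha0 hab
  have hl2 : 0 < Real.log 2 := Real.log_pos (by norm_num)
  have he : 0 < 1 / Real.exp 1 := by positivity
  rcases hx0.eq_or_lt with h0 | hx
  · subst h0
    rw [Real.zero_rpow hb0.ne', Real.zero_rpow ha0.ne']
    simp only [add_zero, Real.one_rpow, sub_self, abs_zero]
    exact mul_nonneg (by positivity) (by linarith)
  have hApos : 0 < x ^ a := Real.rpow_pos_of_pos hx a
  have hBpos : 0 < x ^ b := Real.rpow_pos_of_pos hx b
  have hA1 : x ^ a ≤ 1 := Real.rpow_le_one hx0 hx1 ha0.le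
  have hBA : x ^ b ≤ x ^ a := Real.rpow_le_rpow_of_exponent_ge hx hx1 hab
  have hs : Real.log x ≤ 0 := Real.log_nonpos hx0 hx1
  have hAexp : x ^ a = Real.exp (Real.log x * a) := Real.rpow_def_of_pos hx a
  have hBexp : x ^ b = x ^ a * Real.exp (Real.log x * (b - a)) := by
    rw [hAexp, Real.rpow_def_of_pos hx b, ← Real.exp_add]; ring_nf
  -- `A * (-log A) ≤ 1/e`
  have h1 : x ^ a * (-(Real.log x * a)) ≤ 1 / Real.exp 1 := by
    have h := Real.add_one_le_exp (-(Real.log x * a) - 1)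
    have h' : -(Real.log x * a) ≤ Real.exp (-(Real.log x * a) - 1) := by linarith
    calc x ^ a * (-(Real.log x * a)) ≤ x ^ a * Real.exp (-(Real.log x * a) - 1) :=
          mul_le_mul_of_nonneg_left h' hApos.le
      _ = 1 / Real.exp 1 := by
          rw [hAexp, ← Real.exp_add, one_div, ← Real.exp_neg]; ring_nf
  have h2 : x ^ a - x ^ b ≤ x ^ a * (-(Real.log x * (b - a))) := by
    have h := Real.add_one_le_exp (Real.log x * (b - a))
    rw [hBexp]
    nlinarith
  have h3 : a * (x ^ a - x ^ b) ≤ (1 / Real.exp 1) * (b - a) := by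
    have e1 := mul_le_mul_of_nonneg_left h2 ha0.le
    have e2 := mul_le_mul_of_nonneg_right h1 (sub_nonneg.2 hab)
    linarith
  have h4 : Real.log (1 + x ^ a) - Real.log (1 + x ^ b) ≤ x ^ a - x ^ b := by
    rw [← Real.log_div (by positivity) (by positivity)]
    refine (Real.log_le_sub_one_of_pos (by positivity)).trans ?_
    rw [div_sub_one (by positivity), div_le_iff₀ (by positivity)]
    nlinarith
  have h5 : Real.log (1 + x ^ a) ≤ Real.log 2 := Real.log_le_log (by positivity) (by linarith)
  have h6 : Real.log (1 + x ^ b) ≤ Real.log (1 + x ^ a) :=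
    Real.log_le_log (by positivity) (by linarith)
  have h7 : 0 ≤ Real.log (1 + x ^ b) := Real.log_nonneg (by linarith)
  rw [Real.rpow_def_of_pos (show 0 < 1 + x ^ b by positivity),
    Real.rpow_def_of_pos (show 0 < 1 + x ^ a by positivity)]
  set P := Real.log (1 + x ^ a)
  set Q := Real.log (1 + x ^ b)
  have h8 : (1/b) * (P - Q) ≤ (1 / Real.exp 1) * (1/a - 1/b) := by
    have e : (1 / Real.exp 1) * (1/a - 1/b) = (1/(a*b)) * ((1 / Real.exp 1) * (b - a)) := by
      field_simp
    have e' : (1/b) * (P - Q) = (1/(a*b)) * (a * (P - Q)) := by field_simp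
    rw [e, e']
    refine mul_le_mul_of_nonneg_left ?_ (by positivity)
    exact (mul_le_mul_of_nonneg_left h4 ha0.le).trans h3
  have hb1 : 0 < 1/b := by positivity
  have h9 : P * (1/a - 1/b) ≤ Real.log 2 * (1/a - 1/b) :=
    mul_le_mul_of_nonneg_right h5 (by linarith)
  have h10 : P * (1/a) - Q * (1/b) ≤ (2 * Real.log 2 + 1 / Real.exp 1) * (1/a - 1/b) := by
    have := mul_nonneg hl2.le (sub_nonneg.2 hinv)
    linarith
  have h11 : Q * (1/b) ≤ P * (1/a) := mul_le_mul h6 hinv hb1.le (h7.trans h6)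
  have h12 : 0 ≤ Q * (1/b) := mul_nonneg h7 hb1.le
  rw [mul_neg, mul_neg, abs_of_nonneg (sub_nonneg.2 (Real.exp_le_exp.2 (by linarith)))]
  refine le_trans ?_ h10
  have e1 : Real.exp (-(P * (1/a))) =
      Real.exp (-(Q * (1/b))) * Real.exp (-(P * (1/a) - Q * (1/b))) := by
    rw [← Real.exp_add]; ring_nf
  have e2 := Real.add_one_le_exp (-(P * (1/a) - Q * (1/b)))
  have e3 : Real.exp (-(Q * (1/b))) ≤ 1 := Real.exp_le_one_iff.2 (by linarith)
  have e4 := Real.exp_pos (-(Q * (1/b)))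
  rw [e1]
  have e5 := mul_le_mul_of_nonneg_left e2 e4.le
  have e6 := mul_le_mul_of_nonneg_right e3 (sub_nonneg.2 h11)
  linarith
end

section
/- There exists a constant C > 0 such that for all real numbers a, b with 2 <= a <= b and every real x with 0 < x <= 1, one has 0 <= 1/(1 + x^b) - 1/(1 + x^a) <= C * x * log(b/a). -/
/-- There is `C > 0` such that for all `2 ≤ a ≤ b` and `0 < x ≤ 1`,
`0 ≤ 1/(1+x^b) - 1/(1+x^a) ≤ C * x * log (b/a)`. -/
theorem stmt_4 :
    ∃ C : ℝ, 0 < C ∧ ∀ a b : ℝ, 2 ≤ a → a ≤ b → ∀ x : ℝ, 0 < x → x ≤ 1 →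
      0 ≤ 1/(1 + x ^ b) - 1/(1 + x ^ a) ∧
      1/(1 + x ^ b) - 1/(1 + x ^ a) ≤ C * x * Real.log (b/a) := by
  refine ⟨3, by norm_num, fun a b ha hab x hx hx1 => ?_⟩
  have hba : x ^ b ≤ x ^ a := Real.rpow_le_rpow_of_exponent_ge hx hx1 hab
  have hb0 : 0 < x ^ b := Real.rpow_pos_of_pos hx b
  have ha0 : 0 < x ^ a := Real.rpow_pos_of_pos hx a
  have key : 1/(1 + x ^ b) - 1/(1 + x ^ a) = (x ^ a - x ^ b) / ((1 + x ^ b) * (1 + x ^ a)) := by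
    field_simp
    ring
  have hd : 0 ≤ x ^ a - x ^ b := by linarith
  refine ⟨by rw [key]; positivity, ?_⟩
  have h1 : 1/(1 + x ^ b) - 1/(1 + x ^ a) ≤ x ^ a - x ^ b := by
    rw [key]
    apply div_le_self hd
    nlinarith [mul_pos ha0 hb0]
  have hlog : 1 - a / b ≤ Real.log (b / a) := by
    have := Real.one_sub_inv_le_log_of_pos (x := b / a) (by apply div_pos <;> linarith)
    rwa [inv_div] at this
  have ht : Real.log x ≤ 0 := Real.log_nonpos hx.le hx1
  set t := -Real.log x with htd
  have ht0 : 0 ≤ t := by linarith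
  set E := x ^ (a / 2) with hE
  have hE0 : 0 < E := Real.rpow_pos_of_pos hx _
  have hEx : E ≤ x := by
    have := Real.rpow_le_rpow_of_exponent_ge hx hx1 (show (1:ℝ) ≤ a / 2 by linarith)
    rwa [Real.rpow_one] at this
  have hE1 : E ≤ 1 := hEx.trans hx1
  have hEE : x ^ a = E * E := by
    rw [hE, ← Real.rpow_add hx]; congr 1; ring
  have huE : a * t / 2 * E ≤ 1 := by
    have h := Real.add_one_le_exp (a * t / 2)
    have h2 : E = Real.exp (-(a * t / 2)) := by
      rw [hE, Real.rpow_def_of_pos hx]; congr 1; rw [htd]; ring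
    have h3 : Real.exp (a * t / 2) * E = 1 := by
      rw [h2, ← Real.exp_add]; simp
    nlinarith
  set D := x ^ (b - a) with hD
  have hD0 : 0 < D := Real.rpow_pos_of_pos hx _
  have hbD : x ^ b = E * E * D := by
    rw [← hEE, hD, ← Real.rpow_add hx]; congr 1; ring
  have hD1 : 1 - D ≤ (b - a) * t := by
    have h := Real.add_one_le_exp (-((b - a) * t))
    have h2 : D = Real.exp (-((b - a) * t)) := by
      rw [hD, Real.rpow_def_of_pos hx]; congr 1; rw [htd]; ring
    linarith
  have hb : 0 < b := by linarith
  have main : E * (1 - D) ≤ 3 * (1 - a / b) := by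
    have e : 3 * (1 - a / b) = 3 * (b - a) / b := by field_simp
    rw [e, le_div_iff₀ hb]
    have hX1 : E * (1 - D) ≤ 1 := by nlinarith [mul_pos hE0 hD0]
    rcases le_total (2 * b) (3 * a) with h | h
    · have h5 : E * (1 - D) * a ≤ 2 * (b - a) := by
        calc E * (1 - D) * a ≤ E * ((b - a) * t) * a := by gcongr
          _ = 2 * (b - a) * (a * t / 2 * E) := by ring
          _ ≤ 2 * (b - a) * 1 := by
            apply mul_le_mul_of_nonneg_left huE; linarith
          _ = _ := by ring
      have h6 : 0 ≤ E * (1 - D) := by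
        apply mul_nonneg hE0.le
        have := Real.rpow_le_one hx.le hx1 (show 0 ≤ b - a by linarith)
        linarith
      nlinarith
    · nlinarith
  have hfin : E * (1 - D) ≤ 3 * Real.log (b / a) := by linarith
  have hL : 0 ≤ Real.log (b / a) := Real.log_nonneg (by rw [le_div_iff₀ (by linarith)]; linarith)
  calc _ ≤ x ^ a - x ^ b := h1
    _ = E * (E * (1 - D)) := by rw [hbD, hEE]; ring
    _ ≤ E * (3 * Real.log (b / a)) := by gcongr
    _ ≤ x * (3 * Real.log (b / a)) := by gcongr
    _ = _ := by ring
end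

section
/- For every real x with 0 < x < 1 and every real lambda with 0 < lambda <= 1, 1/(1 + x) - 1/(1 + x^lambda) >= ((1 - lambda)/4) * x * (-log x). -/
/-- For `0 < x < 1` and `0 < λ ≤ 1`,
`1/(1+x) - 1/(1+x^λ) ≥ ((1-λ)/4) * x * (-log x)`. -/
theorem stmt_5 (x : ℝ) (hx0 : 0 < x) (hx1 : x < 1) (lam : ℝ) (hl0 : 0 < lam) (hl1 : lam ≤ 1) :
    ((1 - lam)/4) * x * (-Real.log x) ≤ 1/(1 + x) - 1/(1 + x ^ lam) := by
  have hy1 : x ^ lam ≤ 1 := Real.rpow_le_one hx0.le hx1.le hl0.le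
  have hy0 : 0 < x ^ lam := Real.rpow_pos_of_pos hx0 _
  have hlog : Real.log x < 0 := Real.log_neg hx0 hx1
  have hy : x ^ lam = x * Real.exp ((lam - 1) * Real.log x) := by
    rw [Real.rpow_def_of_pos hx0]
    conv_rhs => rw [← Real.exp_log hx0, ← Real.exp_add, Real.log_exp]
    congr 1; ring
  have he := mul_le_mul_of_nonneg_left (Real.add_one_le_exp ((lam - 1) * Real.log x)) hx0.le
  rw [← hy] at he
  generalize x ^ lam = y at *
  have hA : 0 ≤ (1 - lam) * x * (-Real.log x) :=
    mul_nonneg (mul_nonneg (by linarith) hx0.le) (by linarith)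
  have hyx : (1 - lam) * x * (-Real.log x) ≤ y - x := by linarith
  have h4 : (1 + x) * (1 + y) ≤ 4 := by nlinarith
  have heq : 1/(1 + x) - 1/(1 + y) = (y - x) / ((1 + x) * (1 + y)) := by
    field_simp
    ring
  rw [heq]
  calc _ = ((1 - lam) * x * (-Real.log x)) / 4 := by ring
    _ ≤ (y - x) / 4 := by linarith
    _ ≤ _ := div_le_div_of_nonneg_left (by linarith) (by positivity) h4
end

section
/- For all real numbers a, b with 1 <= a <= b there exists a real x with 0 < x <= 1 such that (1/x) * (1/(1 + x^b) - 1/(1 + x^a)) >= (1 - a/b) / (4*e). -/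
/-- For `1 ≤ a ≤ b` there exists `0 < x ≤ 1` with
`(1/x) * (1/(1+x^b) - 1/(1+x^a)) ≥ (1 - a/b) / (4e)`. -/
theorem stmt_6 (a b : ℝ) (ha : 1 ≤ a) (hab : a ≤ b) :
    ∃ x : ℝ, 0 < x ∧ x ≤ 1 ∧
      (1 - a/b) / (4 * Real.exp 1) ≤ (1/x) * (1/(1 + x ^ b) - 1/(1 + x ^ a)) := by
  have hb : 0 < b := by linarith
  have hx1 : Real.exp (-1/b) ≤ 1 := by
    rw [Real.exp_le_one_iff]
    exact div_nonpos_of_nonpos_of_nonneg (by norm_num) hb.le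
  refine ⟨Real.exp (-1/b), Real.exp_pos _, hx1, ?_⟩
  have e1 : Real.exp (-1/b) ^ b = Real.exp (-1) := by
    rw [← Real.exp_mul]; congr 1; field_simp
  have e2 : Real.exp (-1/b) ^ a = Real.exp (-(a/b)) := by
    rw [← Real.exp_mul]; congr 1; ring
  rw [e1, e2]
  have ht0 : 0 ≤ a / b := by positivity
  have ht1 : a / b ≤ 1 := (div_le_one hb).2 hab
  generalize a / b = t at *
  have hu := Real.exp_pos (-1)
  have hv1 : Real.exp (-t) ≤ 1 := by rw [Real.exp_le_one_iff]; linarith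
  have huv : Real.exp (-1) * (1 - t) ≤ Real.exp (-t) - Real.exp (-1) := by
    have h1 : Real.exp (-t) = Real.exp (-1) * Real.exp (1 - t) := by
      rw [← Real.exp_add]; congr 1; ring
    have h2 := Real.add_one_le_exp (1 - t)
    rw [h1]
    nlinarith
  have hL : (1 - t) / (4 * Real.exp 1) = Real.exp (-1) * (1 - t) / 4 := by
    rw [Real.exp_neg]; field_simp
  have hx : 1 ≤ 1 / Real.exp (-1/b) := (one_le_div (Real.exp_pos _)).2 hx1
  rw [hL]
  have hn : 0 ≤ Real.exp (-1) * (1 - t) := mul_nonneg hu.le (by linarith)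
  generalize Real.exp (-1) = u at *
  generalize Real.exp (-t) = v at *
  have hv : 0 < v := by linarith
  have hd : u * (1 - t) / 4 ≤ 1 / (1 + u) - 1 / (1 + v) := by
    have : 1 / (1 + u) - 1 / (1 + v) = (v - u) / ((1 + u) * (1 + v)) := by
      field_simp; ring
    rw [this]
    apply div_le_div₀ (by linarith) huv (by positivity)
    nlinarith
  have h0 : 0 ≤ u * (1 - t) / 4 := by linarith
  nlinarith
end

section
/- For every real t >= 0 and all natural numbers p, q with 2 <= q <= p, one has 2^(-2*pi^2/3) <= (1 + t^p)^(4/p) / (1 + t^q)^(4/q) <= 1. -/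
theorem aux_pow (m : ℝ) (hm : 0 ≤ m) (n : ℕ) (hn : n ≠ 0) :
    (m ^ n) ^ ((4 : ℝ) / n) = m ^ (4 : ℝ) := by
  have : (n : ℝ) ≠ 0 := by exact_mod_cast hn
  rw [← Real.rpow_natCast, ← Real.rpow_mul hm]
  congr 1
  field_simp

theorem aux_upper (t : ℝ) (ht : 0 ≤ t) (p q : ℕ) (hq : 2 ≤ q) (hqp : q ≤ p) :
    (1 + t ^ p) ^ ((4 : ℝ)/p) ≤ (1 + t ^ q) ^ ((4 : ℝ)/q) := by
  lift t to NNReal using ht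
  have h := NNReal.rpow_add_rpow_le (p := q) (q := p) 1 t
    (by exact_mod_cast (by omega : 0 < q)) (by exact_mod_cast hqp)
  have h2 : (1 + (t : ℝ) ^ p) ^ ((1 : ℝ)/p) ≤ (1 + (t : ℝ) ^ q) ^ ((1 : ℝ)/q) := by
    have h3 := NNReal.coe_le_coe.mpr h
    simpa using h3
  have h4 := Real.rpow_le_rpow (by positivity) h2 (by norm_num : (0 : ℝ) ≤ 4)
  rw [← Real.rpow_mul (by positivity), ← Real.rpow_mul (by positivity)] at h4
  convert h4 using 2 <;> ring

/-- For `t ≥ 0` and naturals `2 ≤ q ≤ p`,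
`2^(-2π²/3) ≤ (1+t^p)^(4/p) / (1+t^q)^(4/q) ≤ 1`. -/
theorem stmt_8 (t : ℝ) (ht : 0 ≤ t) (p q : ℕ) (hq : 2 ≤ q) (hqp : q ≤ p) :
    (2 : ℝ) ^ (-(2 * Real.pi ^ 2 / 3)) ≤ (1 + t ^ p) ^ ((4 : ℝ)/p) / (1 + t ^ q) ^ ((4 : ℝ)/q) ∧
    (1 + t ^ p) ^ ((4 : ℝ)/p) / (1 + t ^ q) ^ ((4 : ℝ)/q) ≤ 1 := by
  have hpos : 0 < (1 + t ^ q) ^ ((4 : ℝ)/q) := by positivity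
  refine ⟨?_, (div_le_one hpos).2 (aux_upper t ht p q hq hqp)⟩
  rw [le_div_iff₀ hpos]
  obtain ⟨m, hm⟩ : ∃ m, m = max 1 t := ⟨_, rfl⟩
  have hm1 : 1 ≤ m := hm ▸ le_max_left _ _
  have hmt : t ≤ m := hm ▸ le_max_right _ _
  have hm0 : 0 ≤ m := by linarith
  have hA : m ^ (4 : ℝ) ≤ (1 + t ^ p) ^ ((4 : ℝ)/p) := by
    rw [← aux_pow m hm0 p (by omega)]
    apply Real.rpow_le_rpow (by positivity) _ (by positivity)
    have : 0 ≤ t ^ p := by positivity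
    rcases max_choice 1 t with h | h
    · rw [hm, h, one_pow]; linarith
    · rw [hm, h]; linarith
  have hB : (1 + t ^ q) ^ ((4 : ℝ)/q) ≤ 2 ^ ((4 : ℝ)/q) * m ^ (4 : ℝ) := by
    rw [← aux_pow m hm0 q (by omega), ← Real.mul_rpow (by norm_num) (by positivity)]
    apply Real.rpow_le_rpow (by positivity) _ (by positivity)
    have h1 : t ^ q ≤ m ^ q := pow_le_pow_left₀ ht hmt q
    have h2 : 1 ≤ m ^ q := one_le_pow₀ hm1
    linarith
  have hC : (2 : ℝ) ^ (-(2 * Real.pi ^ 2 / 3)) * 2 ^ ((4 : ℝ)/q) ≤ 1 := by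
    rw [← Real.rpow_add (by norm_num)]
    apply Real.rpow_le_one_of_one_le_of_nonpos (by norm_num)
    have h1 : (4 : ℝ) / q ≤ 2 := by
      have : (2 : ℝ) ≤ q := by exact_mod_cast hq
      rw [div_le_iff₀ (by linarith)]; linarith
    nlinarith [Real.pi_gt_three]
  calc _ ≤ (2 : ℝ) ^ (-(2 * Real.pi ^ 2 / 3)) * (2 ^ ((4 : ℝ)/q) * m ^ (4 : ℝ)) := by gcongr
    _ = ((2 : ℝ) ^ (-(2 * Real.pi ^ 2 / 3)) * 2 ^ ((4 : ℝ)/q)) * m ^ (4 : ℝ) := by ring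
    _ ≤ 1 * m ^ (4 : ℝ) := by gcongr
    _ ≤ _ := by linarith
end
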